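/- arXiv:2504.19540 — 4 statements merged into one kernel-verified Lean document; each statement's English description precedes it below -/
import Mathlib

section
/- Discrete-time ISS from an ISS-Lyapunov function. Let c > 0, let γ : ℝ≥0 → ℝ≥0 be a K∞-function, and let α : ℝ≥0 → ℝ≥0 be a K-function. Then there exist a KL-function β : ℝ≥0 × ℕ → ℝ≥0 and a K-function σ : ℝ≥0 → ℝ≥0, depending only on c, γ, α, such that: for every ŵ ≥ 0, every function V : ℝ^n → ℝ≥0, and every sequence (y_k)_{k∈ℕ} in ℝ^n satisfying c‖y_k‖² ≤ V(y_k) ≤ γ(‖y_k‖) and V(y_{k+1}) ≤ V(y_k) − c‖y_k‖² + α(ŵ) for all k, one has ‖y_k‖ ≤ β(‖y_0‖, k) + σ(ŵ) for all k ∈ ℕ. -/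
open scoped NNReal

/-- A K-function: continuous, strictly increasing, vanishing at zero. -/
def IsKFunction (g : ℝ≥0 → ℝ≥0) : Prop :=
  Continuous g ∧ StrictMono g ∧ g 0 = 0

/-- A K∞-function: a K-function tending to infinity. -/
def IsKInfFunction (g : ℝ≥0 → ℝ≥0) : Prop :=
  IsKFunction g ∧ Filter.Tendsto g Filter.atTop Filter.atTop

/-- A KL-function: K∞ in the first argument, converging to zero in the second. -/
def IsKLFunction (h : ℝ≥0 → ℕ → ℝ≥0) : Prop :=
  (∀ k : ℕ, IsKInfFunction fun a => h a k) ∧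
    ∀ a : ℝ≥0, Filter.Tendsto (fun k => h a k) Filter.atTop (nhds 0)

theorem IsKFunction.comp {f g : ℝ≥0 → ℝ≥0} (hf : IsKFunction f) (hg : IsKFunction g) :
    IsKFunction fun x => f (g x) :=
  ⟨hf.1.comp hg.1, hf.2.1.comp hg.2.1, by simp [hf.2.2, hg.2.2]⟩

theorem IsKInfFunction.comp {f g : ℝ≥0 → ℝ≥0} (hf : IsKInfFunction f) (hg : IsKInfFunction g) :
    IsKInfFunction fun x => f (g x) :=
  ⟨hf.1.comp hg.1, hf.2.comp hg.2⟩

theorem IsKFunction.add {f g : ℝ≥0 → ℝ≥0} (hf : IsKFunction f) (hg : IsKFunction g) :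
    IsKFunction fun x => f x + g x :=
  ⟨hf.1.add hg.1, hf.2.1.add hg.2.1, by simp [hf.2.2, hg.2.2]⟩

theorem OrderIso.isKInfFunction (e : ℝ≥0 ≃o ℝ≥0) : IsKInfFunction e :=
  ⟨⟨e.continuous, e.strictMono, e.map_bot⟩, e.tendsto_atTop⟩

/-- A K∞-function is an order automorphism of `ℝ≥0`. -/
theorem IsKInfFunction.exists_orderIso {g : ℝ≥0 → ℝ≥0} (hg : IsKInfFunction g) :
    ∃ e : ℝ≥0 ≃o ℝ≥0, ∀ x, e x = g x := by
  have hsurj : Function.Surjective g := by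
    refine hg.1.1.surjective hg.2 ?_
    rw [Filter.OrderBot.atBot_eq, Filter.tendsto_pure, Filter.eventually_pure]
    exact hg.1.2.2
  exact ⟨hg.1.2.1.orderIsoOfSurjective g hsurj, fun _ => rfl⟩

theorem isKInfFunction_sqrt_div {c : ℝ≥0} (hc : 0 < c) :
    IsKInfFunction fun x => NNReal.sqrt (x / c) := by
  have hdiv : IsKInfFunction fun x : ℝ≥0 => x / c :=
    ⟨⟨by fun_prop, fun _ _ h => div_lt_div_of_pos_right h hc, zero_div c⟩,
      Filter.tendsto_id.atTop_div_const hc⟩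
  exact NNReal.sqrt.isKInfFunction.comp hdiv

theorem le_sqrt_div_of_mul_sq_le {c r v : ℝ≥0} (hc : 0 < c) (h : c * r ^ 2 ≤ v) :
    r ≤ NNReal.sqrt (v / c) := by
  rw [NNReal.le_sqrt_iff_sq_le, le_div_iff₀ hc, mul_comm]
  exact h

theorem IsKInfFunction.add_nat_mul_sq {γ : ℝ≥0 → ℝ≥0} (hγ : IsKInfFunction γ) (d : ℝ≥0) (k : ℕ) :
    IsKInfFunction fun u => γ u + k * (d * u ^ 2) := by
  refine ⟨⟨hγ.1.1.add (by fun_prop), hγ.1.2.1.add_monotone fun a b h => ?_, by simp [hγ.1.2.2]⟩,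
    Filter.tendsto_atTop_mono (fun _ => le_self_add) hγ.2⟩
  gcongr

/-- A sequence with Lyapunov values `v` and norms `r` either has reached the sublevel set
determined by the disturbance `a`, or has been decreasing by half of `c * r ^ 2` up to now. -/
theorem le_or_forall_add_half_le {c a : ℝ≥0} (hc : 0 < c) {γ : ℝ≥0 → ℝ≥0} (hγ : Monotone γ)
    {v r : ℕ → ℝ≥0} (hlow : ∀ k, c * r k ^ 2 ≤ v k) (hup : ∀ k, v k ≤ γ (r k))
    (hdec : ∀ k, v (k + 1) ≤ v k - c * r k ^ 2 + a) (k : ℕ) :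
    v k ≤ γ (NNReal.sqrt ((a + a) / c)) + a ∨
      ∀ j < k, v (j + 1) + c / 2 * r j ^ 2 ≤ v j := by
  have hstep (k : ℕ) : v (k + 1) ≤ γ (NNReal.sqrt ((a + a) / c)) + a ∨
      v (k + 1) + c / 2 * r k ^ 2 ≤ v k := by
    rcases le_total (c * r k ^ 2) (a + a) with h | h
    · left
      calc v (k + 1) ≤ v k - c * r k ^ 2 + a := hdec k
        _ ≤ v k + a := by gcongr; exact tsub_le_self
        _ ≤ γ (NNReal.sqrt ((a + a) / c)) + a := by
          gcongr
          exact (hup k).trans (hγ (le_sqrt_div_of_mul_sq_le hc h))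
    · right
      have h1 := hdec k
      rw [← NNReal.coe_le_coe] at h h1 ⊢
      rw [NNReal.coe_add, NNReal.coe_sub (hlow k)] at h1
      push_cast at h h1 ⊢
      linarith
  induction k with
  | zero => right; intro j hj; omega
  | succ k ih =>
    rcases hstep k with h | h
    · exact Or.inl h
    · rcases ih with ih | ih
      · exact Or.inl ((le_self_add.trans h).trans ih)
      · right
        intro j hj
        rcases Nat.lt_succ_iff_lt_or_eq.mp hj with hj | rfl
        · exact ih j hj
        · exact h

theorem add_nat_mul_le_of_forall_add_le {v : ℕ → ℝ≥0} {d u : ℝ≥0} {γ : ℝ≥0 → ℝ≥0}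
    (hγ : StrictMono γ) {r : ℕ → ℝ≥0} (hup : ∀ k, v k ≤ γ (r k)) {k : ℕ}
    (hdec : ∀ j < k, v (j + 1) + d * r j ^ 2 ≤ v j) (hu : γ u = v k) :
    γ u + k * (d * u ^ 2) ≤ v 0 := by
  have hsum : ∀ i ≤ k, v k + i * (d * u ^ 2) ≤ v (k - i) := by
    intro i
    induction i with
    | zero => simp
    | succ i ih =>
      intro hi
      have hprev := ih (by omega)
      have hd := hdec (k - (i + 1)) (by omega)
      rw [show k - (i + 1) + 1 = k - i by omega] at hd
      have hr : u ≤ r (k - (i + 1)) := by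
        rw [← hγ.le_iff_le, hu]
        exact ((le_self_add.trans hprev).trans (le_self_add.trans hd)).trans (hup _)
      calc v k + ((i + 1 : ℕ) : ℝ≥0) * (d * u ^ 2)
          = v k + i * (d * u ^ 2) + d * u ^ 2 := by push_cast; ring
        _ ≤ v (k - i) + d * r (k - (i + 1)) ^ 2 := by gcongr
        _ ≤ v (k - (i + 1)) := hd
  simpa [hu] using hsum k le_rfl

theorem tendsto_zero_of_nat_mul_sq_le {d b : ℝ≥0} (hd : 0 < d) {x : ℕ → ℝ≥0}
    (h : ∀ k : ℕ, k * (d * x k ^ 2) ≤ b) : Filter.Tendsto x Filter.atTop (nhds 0) := by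
  have hlim : Filter.Tendsto (fun k : ℕ => NNReal.sqrt (b / d / k)) Filter.atTop (nhds 0) := by
    have hdiv : Filter.Tendsto (fun k : ℕ => b / d / k) Filter.atTop (nhds 0) :=
      tendsto_const_div_atTop_nhds_zero_nat (b / d)
    simpa [Function.comp_def] using (NNReal.continuous_sqrt.tendsto 0).comp hdiv
  refine tendsto_of_tendsto_of_tendsto_of_le_of_le' tendsto_const_nhds hlim
    (Filter.Eventually.of_forall fun _ => zero_le) ?_
  filter_upwards [Filter.eventually_gt_atTop 0] with k hk
  have hk' : (0 : ℝ≥0) < k := by exact_mod_cast hk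
  rw [NNReal.le_sqrt_iff_sq_le, div_div, le_div_iff₀ (mul_pos hd hk')]
  calc x k ^ 2 * (d * k) = k * (d * x k ^ 2) := by ring
    _ ≤ b := h k

/-- Discrete-time ISS from an ISS-Lyapunov function.
Given `c > 0`, a K∞-function `γ` and a K-function `α`, there exist a KL-function `β` and a
K-function `σ` (depending only on `c, γ, α`) such that for every `ŵ ≥ 0`, every
`V : ℝ^n → ℝ≥0` and every sequence `(y_k)` with `c‖y_k‖² ≤ V(y_k) ≤ γ(‖y_k‖)` and
`V(y_{k+1}) ≤ V(y_k) − c‖y_k‖² + α(ŵ)` for all `k`, one has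
`‖y_k‖ ≤ β(‖y_0‖, k) + σ(ŵ)` for all `k`. -/
theorem stmt_4 (n : ℕ) (c : ℝ≥0) (hc : 0 < c)
    (γ α : ℝ≥0 → ℝ≥0) (hγ : IsKInfFunction γ) (hα : IsKFunction α) :
    ∃ β : ℝ≥0 → ℕ → ℝ≥0, ∃ σ : ℝ≥0 → ℝ≥0, IsKLFunction β ∧ IsKFunction σ ∧
      ∀ (wHat : ℝ≥0) (V : EuclideanSpace ℝ (Fin n) → ℝ≥0)
        (y : ℕ → EuclideanSpace ℝ (Fin n)),
        (∀ k : ℕ, c * ‖y k‖₊ ^ 2 ≤ V (y k)) →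
        (∀ k : ℕ, V (y k) ≤ γ ‖y k‖₊) →
        (∀ k : ℕ, V (y (k + 1)) ≤ V (y k) - c * ‖y k‖₊ ^ 2 + α wHat) →
        ∀ k : ℕ, ‖y k‖₊ ≤ β ‖y 0‖₊ k + σ wHat := by
  have hsqrt := isKInfFunction_sqrt_div hc
  choose e he using fun k : ℕ => (hγ.add_nat_mul_sq (c / 2) k).exists_orderIso
  obtain ⟨eγ, heγ⟩ := hγ.exists_orderIso
  refine ⟨fun a k => NNReal.sqrt (γ ((e k).symm (γ a)) / c),
    fun w => NNReal.sqrt ((γ (NNReal.sqrt ((α w + α w) / c)) + α w) / c),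
    ⟨fun k => hsqrt.comp (hγ.comp ((e k).symm.isKInfFunction.comp hγ)), fun a => ?_⟩,
    hsqrt.1.comp ((hγ.1.comp (hsqrt.1.comp (hα.add hα))).add hα), ?_⟩
  · have hx : Filter.Tendsto (fun k => (e k).symm (γ a)) Filter.atTop (nhds 0) := by
      refine tendsto_zero_of_nat_mul_sq_le (b := γ a) (half_pos hc) fun k => ?_
      have h := (he k ((e k).symm (γ a))).symm
      rw [OrderIso.apply_symm_apply] at h
      exact le_add_self.trans h.le
    have h := ((hsqrt.1.comp hγ.1).1.tendsto 0).comp hx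
    simpa [Function.comp_def, hγ.1.2.2] using h
  · intro wHat V y hlow hup hdec k
    have hk := le_sqrt_div_of_mul_sq_le hc (hlow k)
    rcases le_or_forall_add_half_le hc hγ.1.2.1.monotone hlow hup hdec k with h | h
    · exact (hk.trans (hsqrt.1.2.1.monotone h)).trans le_add_self
    · have hu : γ (eγ.symm (V (y k))) = V (y k) := by rw [← heγ, eγ.apply_symm_apply]
      have hbound := add_nat_mul_le_of_forall_add_le (v := fun j => V (y j)) hγ.1.2.1 hup h hu
      rw [← he k] at hbound
      have hle := (e k).le_symm_apply.mpr (hbound.trans (hup 0))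
      refine (hk.trans (hsqrt.1.2.1.monotone ?_)).trans le_self_add
      rw [← hu]
      exact hγ.1.2.1.monotone hle
end

section
/- Inter-sample chaining bound (core of the gISS theorem). Let c > 0, b ≥ 0, let γ : ℝ≥0 → ℝ≥0 be a K∞-function, β : ℝ≥0 × ℕ → ℝ≥0 a KL-function, and δ : ℝ≥0 → ℝ≥0 a K-function. Let (t_k)_{k≥1} be a strictly increasing unbounded sequence of natural numbers, let x : ℕ → ℝ^n, set y_k := x(t_k), and let V : ℝ^n → ℝ≥0. Assume: (i) c‖ξ‖² ≤ V(ξ) ≤ γ(‖ξ‖) for all ξ ∈ ℝ^n; (ii) ‖y_k‖ ≤ β(‖y_1‖, k) + δ(b) for all k ≥ 1; (iii) for every k ≥ 1 and every t with t_k ≤ t ≤ t_{k+1}, there exists ξ ∈ ℝ^n with V(ξ) ≤ V(y_k) and ‖x(t) − ξ‖ ≤ b. Then for every t ≥ t_1, with n(t) := max{k ≥ 1 : t_k ≤ t}, one has ‖x(t)‖ ≤ √( γ( β(‖y_1‖, n(t)) + δ(b) ) / c ) + b. -/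
open scoped NNReal

/-- Inter-sample chaining bound (core of the gISS theorem).
`(t_k)_{k≥1}` are the (strictly increasing, unbounded) triggering times, `y_k = x(t_k)`,
`V` satisfies `c‖ξ‖² ≤ V(ξ) ≤ γ(‖ξ‖)`, the sampled states satisfy the ISS bound
`‖y_k‖ ≤ β(‖y_1‖,k) + δ(b)`, and between consecutive triggers the state is within `b` of a
point `ξ` with `V(ξ) ≤ V(y_k)`.  Then for every `t ≥ t_1`, with
`n(t) = max{k ≥ 1 : t_k ≤ t}` (characterized by `1 ≤ N`, `t_N ≤ t < t_{N+1}`),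
`‖x(t)‖ ≤ √(γ(β(‖y_1‖, n(t)) + δ(b))/c) + b`. -/
theorem stmt_5 (n : ℕ) (c b : ℝ≥0) (hc : 0 < c)
    (γ : ℝ≥0 → ℝ≥0) (hγ : IsKInfFunction γ)
    (β : ℝ≥0 → ℕ → ℝ≥0) (hβ : IsKLFunction β)
    (δ : ℝ≥0 → ℝ≥0) (hδ : IsKFunction δ)
    (t : ℕ → ℕ)
    (ht : ∀ k : ℕ, 1 ≤ k → t k < t (k + 1))
    (htu : ∀ T : ℕ, ∃ k : ℕ, 1 ≤ k ∧ T ≤ t k)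
    (x : ℕ → EuclideanSpace ℝ (Fin n))
    (V : EuclideanSpace ℝ (Fin n) → ℝ≥0)
    (hV : ∀ ξ : EuclideanSpace ℝ (Fin n), c * ‖ξ‖₊ ^ 2 ≤ V ξ ∧ V ξ ≤ γ ‖ξ‖₊)
    (hy : ∀ k : ℕ, 1 ≤ k → ‖x (t k)‖₊ ≤ β ‖x (t 1)‖₊ k + δ b)
    (hpred : ∀ k : ℕ, 1 ≤ k → ∀ s : ℕ, t k ≤ s → s ≤ t (k + 1) →
      ∃ ξ : EuclideanSpace ℝ (Fin n), V ξ ≤ V (x (t k)) ∧ ‖x s - ξ‖₊ ≤ b) :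
    ∀ s : ℕ, t 1 ≤ s → ∀ N : ℕ, 1 ≤ N → t N ≤ s → s < t (N + 1) →
      ‖x s‖₊ ≤ NNReal.sqrt (γ (β ‖x (t 1)‖₊ N + δ b) / c) + b := by
  intro s _ N hN hNs hsN
  obtain ⟨ξ, hξV, hξ⟩ := hpred N hN s hNs hsN.le
  have hchain : c * ‖ξ‖₊ ^ 2 ≤ γ (β ‖x (t 1)‖₊ N + δ b) :=
    calc c * ‖ξ‖₊ ^ 2 ≤ V ξ := (hV ξ).1
      _ ≤ V (x (t N)) := hξV
      _ ≤ γ ‖x (t N)‖₊ := (hV _).2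
      _ ≤ γ (β ‖x (t 1)‖₊ N + δ b) := hγ.1.2.1.monotone (hy N hN)
  have hnorm : ‖ξ‖₊ ≤ NNReal.sqrt (γ (β ‖x (t 1)‖₊ N + δ b) / c) := by
    rw [NNReal.le_sqrt_iff_sq_le, le_div_iff₀ hc, mul_comm]
    exact hchain
  calc ‖x s‖₊ = ‖ξ + (x s - ξ)‖₊ := by rw [add_sub_cancel]
    _ ≤ ‖ξ‖₊ + ‖x s - ξ‖₊ := nnnorm_add_le _ _
    _ ≤ NNReal.sqrt (γ (β ‖x (t 1)‖₊ N + δ b) / c) + b := add_le_add hnorm hξ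
end

section
/- Incremental contraction of the tracking controller. Let f : ℝ^n × ℝ^m → ℝ^n, κ : ℝ^n × ℝ^n × ℝ^m → ℝ^m, V_δ : ℝ^n × ℝ^n → ℝ≥0, and constants 0 < c_l ≤ c_u, κ_max ≥ 0, δ_loc > 0, ρ ∈ (0, 1) such that for all x, z ∈ ℝ^n with V_δ(x, z) ≤ δ_loc and all v ∈ ℝ^m: c_l‖x − z‖² ≤ V_δ(x, z) ≤ c_u‖x − z‖², ‖κ(x, z, v) − v‖ ≤ κ_max‖x − z‖, and V_δ(f(x, κ(x, z, v)), f(z, v)) ≤ ρ V_δ(x, z). Let (v_k)_{k∈ℕ} be any sequence in ℝ^m and define z_{k+1} := f(z_k, v_k) and x_{k+1} := f(x_k, κ(x_k, z_k, v_k)), with initial states satisfying V_δ(x_0, z_0) ≤ δ_loc. Then for all k ∈ ℕ: V_δ(x_k, z_k) ≤ ρ^k V_δ(x_0, z_0) ≤ δ_loc, ‖x_k − z_k‖² ≤ ρ^k (c_u/c_l) ‖x_0 − z_0‖², and ‖κ(x_k, z_k, v_k) − v_k‖² ≤ κ_max² ρ^k (c_u/c_l) ‖x_0 − z_0‖². 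-/
/-- Incremental contraction of the tracking controller.
Under the local incremental stability assumption (δ-Lyapunov function `V_δ` with bounds
`c_l‖x−z‖² ≤ V_δ(x,z) ≤ c_u‖x−z‖²`, feedback deviation bound `‖κ(x,z,v) − v‖ ≤ κ_max‖x−z‖`
and contraction `V_δ(f(x,κ(x,z,v)), f(z,v)) ≤ ρV_δ(x,z)` whenever `V_δ(x,z) ≤ δ_loc`),
for any reference `z_{k+1} = f(z_k, v_k)` and tracking trajectory
`x_{k+1} = f(x_k, κ(x_k, z_k, v_k))` with `V_δ(x_0, z_0) ≤ δ_loc` one has, for all `k`: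
`V_δ(x_k,z_k) ≤ ρ^k V_δ(x_0,z_0) ≤ δ_loc`,
`‖x_k − z_k‖² ≤ ρ^k (c_u/c_l)‖x_0 − z_0‖²`, and
`‖κ(x_k,z_k,v_k) − v_k‖² ≤ κ_max² ρ^k (c_u/c_l)‖x_0 − z_0‖²`. -/
theorem stmt_10 (n m : ℕ)
    (f : EuclideanSpace ℝ (Fin n) → EuclideanSpace ℝ (Fin m) → EuclideanSpace ℝ (Fin n))
    (κ : EuclideanSpace ℝ (Fin n) → EuclideanSpace ℝ (Fin n) →
      EuclideanSpace ℝ (Fin m) → EuclideanSpace ℝ (Fin m))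
    (Vδ : EuclideanSpace ℝ (Fin n) → EuclideanSpace ℝ (Fin n) → ℝ)
    (hVδnn : ∀ x z, 0 ≤ Vδ x z)
    (cl cu κmax δloc ρ : ℝ)
    (hcl : 0 < cl) (hclcu : cl ≤ cu) (hκmax : 0 ≤ κmax) (hδloc : 0 < δloc)
    (hρ : ρ ∈ Set.Ioo (0 : ℝ) 1)
    (hinc : ∀ (x z : EuclideanSpace ℝ (Fin n)) (v : EuclideanSpace ℝ (Fin m)),
      Vδ x z ≤ δloc →
        cl * ‖x - z‖ ^ 2 ≤ Vδ x z ∧ Vδ x z ≤ cu * ‖x - z‖ ^ 2 ∧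
        ‖κ x z v - v‖ ≤ κmax * ‖x - z‖ ∧
        Vδ (f x (κ x z v)) (f z v) ≤ ρ * Vδ x z)
    (v : ℕ → EuclideanSpace ℝ (Fin m))
    (z x : ℕ → EuclideanSpace ℝ (Fin n))
    (hz : ∀ k : ℕ, z (k + 1) = f (z k) (v k))
    (hx : ∀ k : ℕ, x (k + 1) = f (x k) (κ (x k) (z k) (v k)))
    (h0 : Vδ (x 0) (z 0) ≤ δloc) :
    ∀ k : ℕ,
      Vδ (x k) (z k) ≤ ρ ^ k * Vδ (x 0) (z 0) ∧
      ρ ^ k * Vδ (x 0) (z 0) ≤ δloc ∧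
      ‖x k - z k‖ ^ 2 ≤ ρ ^ k * (cu / cl) * ‖x 0 - z 0‖ ^ 2 ∧
      ‖κ (x k) (z k) (v k) - v k‖ ^ 2 ≤ κmax ^ 2 * ρ ^ k * (cu / cl) * ‖x 0 - z 0‖ ^ 2 := by
  have hρ0 : 0 ≤ ρ := hρ.1.le
  have hdecay : ∀ k, ρ ^ k * Vδ (x 0) (z 0) ≤ δloc := fun k =>
    (mul_le_of_le_one_left (hVδnn _ _) (pow_le_one₀ hρ0 hρ.2.le)).trans h0
  have hV : ∀ k, Vδ (x k) (z k) ≤ ρ ^ k * Vδ (x 0) (z 0) := by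
    intro k
    induction k with
    | zero => simp
    | succ k ih =>
      rw [hx, hz, pow_succ', mul_assoc]
      exact (hinc _ _ _ (ih.trans (hdecay k))).2.2.2.trans (mul_le_mul_of_nonneg_left ih hρ0)
  intro k
  obtain ⟨hlower, -, hκ, -⟩ := hinc (x k) (z k) (v k) ((hV k).trans (hdecay k))
  have hupper := (hinc (x 0) (z 0) (v 0) h0).2.1
  have hstate : ‖x k - z k‖ ^ 2 ≤ ρ ^ k * (cu / cl) * ‖x 0 - z 0‖ ^ 2 := by
    have hrw : ρ ^ k * (cu / cl) * ‖x 0 - z 0‖ ^ 2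
        = ρ ^ k * (cu * ‖x 0 - z 0‖ ^ 2) / cl := by ring
    rw [hrw, le_div_iff₀' hcl]
    exact (hlower.trans (hV k)).trans (mul_le_mul_of_nonneg_left hupper (pow_nonneg hρ0 k))
  refine ⟨hV k, hdecay k, hstate, ?_⟩
  calc ‖κ (x k) (z k) (v k) - v k‖ ^ 2
      ≤ (κmax * ‖x k - z k‖) ^ 2 := pow_le_pow_left₀ (norm_nonneg _) hκ 2
    _ = κmax ^ 2 * ‖x k - z k‖ ^ 2 := mul_pow _ _ _
    _ ≤ κmax ^ 2 * (ρ ^ k * (cu / cl) * ‖x 0 - z 0‖ ^ 2) :=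
        mul_le_mul_of_nonneg_left hstate (sq_nonneg _)
    _ = κmax ^ 2 * ρ ^ k * (cu / cl) * ‖x 0 - z 0‖ ^ 2 := by ring
end

section
/- Shifted-trajectory feasibility and cost monotonicity. Let f : ℝ^n × ℝ^m → ℝ^n; let H (q×n) and L (r×m) be real matrices; let P, Q ∈ ℝ^{n×n}, R ∈ ℝ^{m×m} be symmetric positive definite; let ρ ∈ (0,1), ε > 0, ε_k := ε(1−(√ρ)^k)/(1−√ρ), N ≥ 1, α_f > 0, X_f := {x : xᵀPx ≤ α_f}, and κ_f : ℝ^n → ℝ^m such that for all x ∈ X_f: f(x, κ_f(x)) ∈ X_f, f(x,κ_f(x))ᵀPf(x,κ_f(x)) ≤ xᵀPx − xᵀQx − κ_f(x)ᵀRκ_f(x), Hx ≤ (1−ε_N)·𝟙, and Lκ_f(x) ≤ (1−ε_N)·𝟙. Suppose (x_k)_{k∈ℕ}, (u_k)_{k∈ℕ} satisfy x_{k+1} = f(x_k, u_k) for all k, H x_k ≤ (1−ε_k)·𝟙 and L u_k ≤ (1−ε_k)·𝟙 for 0 ≤ k ≤ N−1, x_N ∈ X_f, and u_k = κ_f(x_k)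 for k ≥ N. Fix 1 ≤ j ≤ N and define x'_k := x_{k+j}, u'_k := u_{k+j}. Then (x', u') is feasible for the N-step problem with initial state x_j: x'_{k+1} = f(x'_k, u'_k), H x'_k ≤ (1−ε_k)·𝟙 and L u'_k ≤ (1−ε_k)·𝟙 for 0 ≤ k ≤ N−1, and x'_N ∈ X_f; moreover, with ℓ(x,u) := xᵀQx + uᵀRu, Σ_{k=0}^{N−1} ℓ(x'_k, u'_k) + x'_Nᵀ P x'_N ≤ Σ_{k=0}^{N−1} ℓ(x_k, u_k) + x_Nᵀ P x_N − Σ_{k=0}^{j−1} ℓ(x_k, u_k). -/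
open Matrix

/-- The tightening `ε (1 - s ^ k) / (1 - s)` is nondecreasing in `k` for `s ∈ [0, 1)`. -/
theorem monotone_geometric_tightening {ε s : ℝ} (hε : 0 ≤ ε) (hs0 : 0 ≤ s) (hs1 : s < 1) :
    Monotone fun k : ℕ => ε * (1 - s ^ k) / (1 - s) := by
  intro a b hab
  have hpow : s ^ b ≤ s ^ a := pow_le_pow_of_le_one hs0 hs1.le hab
  have hs : 0 ≤ 1 - s := by linarith
  dsimp only
  gcongr

/-- A one-step decrease `V (k + 1) ≤ V k - c k` from time `N` on makes the accumulated cost plus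
terminal value nonincreasing from `N` on. -/
theorem sum_range_add_le_of_step_decrease {c V : ℕ → ℝ} {N : ℕ}
    (h : ∀ k, N ≤ k → V (k + 1) ≤ V k - c k) {M : ℕ} (hM : N ≤ M) :
    ∑ k ∈ Finset.range M, c k + V M ≤ ∑ k ∈ Finset.range N, c k + V N := by
  induction M, hM using Nat.le_induction with
  | base => exact le_rfl
  | succ k hk ih =>
    rw [Finset.sum_range_succ]
    linarith [h k hk]

/-- Shifted-trajectory feasibility and cost monotonicity.
Given tightened constraints `ε_k = ε(1−(√ρ)^k)/(1−√ρ)`, a terminal set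
`X_f = {x : xᵀPx ≤ α_f}` that is invariant under the terminal controller `κ_f`, satisfies
the terminal cost decrease and the tightened constraints at level `ε_N`, and a feasible
trajectory `(x, u)` (dynamics, tightened constraints for `0 ≤ k ≤ N−1`, `x_N ∈ X_f`,
`u_k = κ_f(x_k)` for `k ≥ N`): for every shift `1 ≤ j ≤ N`, the shifted trajectory
`x'_k = x_{k+j}`, `u'_k = u_{k+j}` is feasible for the `N`-step problem with initial state
`x_j`, and its cost satisfies
`Σ_{k<N} ℓ(x'_k,u'_k) + x'_NᵀPx'_N ≤ Σ_{k<N} ℓ(x_k,u_k) + x_NᵀPx_N − Σ_{k<j} ℓ(x_k,u_k)`. -/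
theorem stmt_15 (n m q r : ℕ)
    (f : EuclideanSpace ℝ (Fin n) → EuclideanSpace ℝ (Fin m) → EuclideanSpace ℝ (Fin n))
    (H : Matrix (Fin q) (Fin n) ℝ) (L : Matrix (Fin r) (Fin m) ℝ)
    (P Q : Matrix (Fin n) (Fin n) ℝ) (R : Matrix (Fin m) (Fin m) ℝ)
    (hP : P.PosDef) (hQ : Q.PosDef) (hR : R.PosDef)
    (ρ ε : ℝ) (hρ : ρ ∈ Set.Ioo (0 : ℝ) 1) (hε : 0 < ε)
    (εk : ℕ → ℝ)
    (hεk : ∀ k : ℕ, εk k = ε * (1 - Real.sqrt ρ ^ k) / (1 - Real.sqrt ρ))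
    (N : ℕ) (hN : 1 ≤ N)
    (αf : ℝ) (hαf : 0 < αf)
    (Xf : Set (EuclideanSpace ℝ (Fin n)))
    (hXf : Xf = {x : EuclideanSpace ℝ (Fin n) | x ⬝ᵥ P.mulVec x ≤ αf})
    (κf : EuclideanSpace ℝ (Fin n) → EuclideanSpace ℝ (Fin m))
    (hterm : ∀ x ∈ Xf,
      f x (κf x) ∈ Xf ∧
      f x (κf x) ⬝ᵥ P.mulVec (f x (κf x)) ≤
        x ⬝ᵥ P.mulVec x - x ⬝ᵥ Q.mulVec x - κf x ⬝ᵥ R.mulVec (κf x) ∧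
      (∀ i : Fin q, H.mulVec x i ≤ 1 - εk N) ∧
      (∀ i : Fin r, L.mulVec (κf x) i ≤ 1 - εk N))
    (x : ℕ → EuclideanSpace ℝ (Fin n)) (u : ℕ → EuclideanSpace ℝ (Fin m))
    (hdyn : ∀ k : ℕ, x (k + 1) = f (x k) (u k))
    (hxcon : ∀ k : ℕ, k ≤ N - 1 → ∀ i : Fin q, H.mulVec (x k) i ≤ 1 - εk k)
    (hucon : ∀ k : ℕ, k ≤ N - 1 → ∀ i : Fin r, L.mulVec (u k) i ≤ 1 - εk k)
    (hxN : x N ∈ Xf)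
    (huterm : ∀ k : ℕ, N ≤ k → u k = κf (x k))
    (j : ℕ) (hj1 : 1 ≤ j) (hjN : j ≤ N)
    (x' : ℕ → EuclideanSpace ℝ (Fin n)) (u' : ℕ → EuclideanSpace ℝ (Fin m))
    (hx' : ∀ k : ℕ, x' k = x (k + j)) (hu' : ∀ k : ℕ, u' k = u (k + j)) :
    (∀ k : ℕ, x' (k + 1) = f (x' k) (u' k)) ∧
    (∀ k : ℕ, k ≤ N - 1 →
      (∀ i : Fin q, H.mulVec (x' k) i ≤ 1 - εk k) ∧
      (∀ i : Fin r, L.mulVec (u' k) i ≤ 1 - εk k)) ∧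
    x' N ∈ Xf ∧
    (∑ k ∈ Finset.range N,
        (x' k ⬝ᵥ Q.mulVec (x' k) + u' k ⬝ᵥ R.mulVec (u' k))) +
        x' N ⬝ᵥ P.mulVec (x' N) ≤
      (∑ k ∈ Finset.range N,
        (x k ⬝ᵥ Q.mulVec (x k) + u k ⬝ᵥ R.mulVec (u k))) +
        x N ⬝ᵥ P.mulVec (x N) -
        ∑ k ∈ Finset.range j,
          (x k ⬝ᵥ Q.mulVec (x k) + u k ⬝ᵥ R.mulVec (u k)) := by
  have hmono : Monotone εk := by
    rw [funext hεk]
    exact monotone_geometric_tightening hε.le (Real.sqrt_nonneg ρ)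
      ((Real.sqrt_lt' one_pos).2 (by simpa using hρ.2))
  have hmem : ∀ k, N ≤ k → x k ∈ Xf := by
    intro k hk
    induction k, hk using Nat.le_induction with
    | base => exact hxN
    | succ k hk ih =>
      rw [hdyn, huterm k hk]
      exact (hterm _ ih).1
  obtain rfl : x' = fun k => x (k + j) := funext hx'
  obtain rfl : u' = fun k => u (k + j) := funext hu'
  refine ⟨fun k => ?_, fun k hk => ?_, hmem _ (Nat.le_add_right N j), ?_⟩
  · simpa only [Nat.add_right_comm] using hdyn (k + j)
  · rcases lt_or_ge (k + j) N with hlt | hge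
    · have hle : εk k ≤ εk (k + j) := hmono (Nat.le_add_right k j)
      exact ⟨fun i => (hxcon _ (by omega) i).trans (by linarith),
        fun i => (hucon _ (by omega) i).trans (by linarith)⟩
    · have hle : εk k ≤ εk N := hmono (by omega)
      obtain ⟨-, -, hH, hL⟩ := hterm _ (hmem _ hge)
      rw [← huterm _ hge] at hL
      exact ⟨fun i => (hH i).trans (by linarith), fun i => (hL i).trans (by linarith)⟩
  · have hstep : ∀ k, N ≤ k → x (k + 1) ⬝ᵥ P.mulVec (x (k + 1)) ≤
        x k ⬝ᵥ P.mulVec (x k) - (x k ⬝ᵥ Q.mulVec (x k) + u k ⬝ᵥ R.mulVec (u k)) := by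
      intro k hk
      rw [hdyn, huterm k hk]
      linarith [(hterm _ (hmem k hk)).2.1]
    have hcost := sum_range_add_le_of_step_decrease
      (c := fun k => x k ⬝ᵥ Q.mulVec (x k) + u k ⬝ᵥ R.mulVec (u k))
      (V := fun k => x k ⬝ᵥ P.mulVec (x k)) hstep (Nat.le_add_left N j)
    rw [Finset.sum_range_add] at hcost
    simp only [Nat.add_comm j] at hcost
    linarith
end
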